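/- For every base b ≥ 3, every natural number can be reduced to a single base-b digit (a number less than b) in at most three applications of partition and sum in base b. -/

import Mathlib

/-- `PartSum b n m` : `m` is obtained from `n` by splitting the base-`b` digit string of
`n` into consecutive nonempty blocks and summing the base-`b` values of the blocks. -/
def PartSum (b n m : ℕ) : Prop :=
  ∃ L : List (List ℕ), (∀ l ∈ L, l ≠ []) ∧ L.flatten = Nat.digits b n ∧
    m = (L.map (fun l => Nat.ofDigits b l)).sum

/-!
The first step is the only one that involves a choice. Merging two adjacent blocks that are single
digits changes the block sum by `(b - 1) * y ≤ (b - 1) ^ 2`, where `y` is the higher digit. Going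
from single digits to consecutive pairs one merge at a time, block sums therefore meet every window
`[A, A + (b - 1) ^ 2)` between the digit sum `s` and about `(b + 1) * s / 2`, the average of the two
ways of pairing off the digits. The numbers `2 * b ^ k` and `(b + 1) * b ^ k` are spaced closely
enough for some such window to start at one of them. Everything in that window has digit sum at most
`2 + (2 * b - 4)`, and the digit sum of a number up to `2 * b - 2` is a single digit.
-/

section DigitSum

/-- The sum of the base-`b` digits of `n`: the outcome of partition and sum when every block is a
single digit. -/
def digitSum (b n : ℕ) : ℕ := (Nat.digits b n).sum

variable {b : ℕ}

theorem digitSum_le_self (b n : ℕ) : digitSum b n ≤ n := Nat.digit_sum_le b n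

theorem digitSum_eq_mod_add_div (hb : 1 < b) (n : ℕ) :
    digitSum b n = n % b + digitSum b (n / b) := by
  rcases Nat.eq_zero_or_pos n with rfl | hn
  · simp [digitSum]
  · simp [digitSum, Nat.digits_def' hb hn]

theorem digitSum_mul_base_pow (hb : 1 < b) (c k : ℕ) : digitSum b (c * b ^ k) = digitSum b c := by
  rcases Nat.eq_zero_or_pos c with rfl | hc
  · simp
  · simp [digitSum, mul_comm c, Nat.digits_base_pow_mul hb hc]

theorem digitSum_add_mul (hb : 1 < b) {r : ℕ} (hr : r < b) (q : ℕ) :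
    digitSum b (r + b * q) = r + digitSum b q := by
  rw [digitSum_eq_mod_add_div hb, Nat.add_mul_mod_self_left, Nat.mod_eq_of_lt hr,
    Nat.add_mul_div_left _ _ (by omega), Nat.div_eq_of_lt hr, zero_add]

theorem digitSum_add_le (hb : 1 < b) (m n : ℕ) :
    digitSum b (m + n) ≤ digitSum b m + digitSum b n := by
  induction hN : m + n using Nat.strong_induction_on generalizing m n with
  | _ N ih =>
    subst hN
    rcases Nat.eq_zero_or_pos (m + n) with h0 | hpos
    · simp [h0, digitSum]
    rw [digitSum_eq_mod_add_div hb m, digitSum_eq_mod_add_div hb n]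
    have hm := Nat.mod_add_div m b
    have hn := Nat.mod_add_div n b
    have hmb := Nat.mod_lt m (Nat.zero_lt_of_lt hb)
    have hnb := Nat.mod_lt n (Nat.zero_lt_of_lt hb)
    generalize m % b = r, m / b = p, n % b = r', n / b = q at *
    have hpq : 2 * (p + q) ≤ b * (p + q) := Nat.mul_le_mul_right _ hb
    rcases lt_or_ge (r + r') b with hcarry | hcarry
    · have hsum : m + n = (r + r') + b * (p + q) := by rw [← hm, ← hn]; ring
      rw [hsum, digitSum_add_mul hb hcarry]
      have hadd := ih (p + q) (by omega) p q rfl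
      omega
    · obtain ⟨t, ht⟩ := Nat.exists_eq_add_of_le hcarry
      have hsum : m + n = t + b * (p + q + 1) := by
        rw [← hm, ← hn]
        linear_combination ht
      rw [hsum, digitSum_add_mul hb (by omega)]
      have hsucc := ih (p + q + 1) (by rw [mul_add] at hsum; omega) (p + q) 1 rfl
      have hadd := ih (p + q) (by rw [mul_add] at hsum; omega) p q rfl
      have hone : digitSum b 1 ≤ 1 := digitSum_le_self b 1
      omega

theorem digitSum_lt_base (hb : 1 < b) {n : ℕ} (hn : n + 1 < 2 * b) : digitSum b n < b := by
  rcases lt_or_ge n b with h | h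
  · exact (digitSum_le_self b n).trans_lt h
  · obtain ⟨r, rfl⟩ := Nat.exists_eq_add_of_le' h
    have hr : digitSum b (r + b * 1) = r + digitSum b 1 := digitSum_add_mul hb (by omega) 1
    have hone : digitSum b 1 ≤ 1 := digitSum_le_self b 1
    rw [mul_one] at hr
    omega

theorem digitSum_add_four_le (hb : 1 < b) {t : ℕ} (ht : t < (b - 1) ^ 2) :
    digitSum b t + 4 ≤ 2 * b := by
  obtain ⟨e, rfl⟩ : ∃ e, b = e + 2 := Nat.exists_eq_add_of_le' hb
  have hdigits : digitSum (e + 2) t ≤ t % (e + 2) + t / (e + 2) :=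
    (digitSum_eq_mod_add_div hb t).trans_le
      (Nat.add_le_add_left (digitSum_le_self _ _) _)
  have hlow := Nat.mod_lt t (Nat.zero_lt_of_lt hb)
  have hdecomp := Nat.mod_add_div t (e + 2)
  have hsq : (e + 2 - 1) ^ 2 = (e + 2) * e + 1 := by
    rw [show e + 2 - 1 = e + 1 from rfl]
    ring
  generalize t % (e + 2) = y, t / (e + 2) = x at *
  rcases lt_or_ge x e with hx | hx
  · omega
  · have hmul : (e + 2) * e ≤ (e + 2) * x := Nat.mul_le_mul_left _ hx
    have hxe : x ≤ e := Nat.le_of_mul_le_mul_left (c := e + 2) (by omega) (by omega)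
    omega

theorem digitSum_digitSum_lt_base (hb : 1 < b) {A m : ℕ} (hA : digitSum b A ≤ 2)
    (hm : m ∈ Set.Ico A (A + (b - 1) ^ 2)) : digitSum b (digitSum b m) < b := by
  obtain ⟨t, rfl⟩ := Nat.exists_eq_add_of_le hm.1
  have ht : digitSum b t + 4 ≤ 2 * b := digitSum_add_four_le hb (Nat.lt_of_add_lt_add_left hm.2)
  have hadd : digitSum b (A + t) ≤ digitSum b A + digitSum b t := digitSum_add_le hb A t
  exact digitSum_lt_base hb (by omega)

/-- With `k` maximal such that `A = 2 * b ^ k` satisfies the upper bound, that `A` or the next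
candidate `(b + 1) * b ^ k` works: successive candidates grow by at most a factor `(b + 1) / 2`,
because `4 * b ≤ (b + 1) ^ 2`. -/
theorem exists_digitSum_le_two_and_lt_add (hb : 1 < b) {s g : ℕ} (hs : 4 + g ≤ (b + 1) * s) :
    ∃ A, digitSum b A ≤ 2 ∧ 2 * A + g ≤ (b + 1) * s ∧ s < A + g := by
  obtain ⟨k, hk, hk_succ⟩ :
      ∃ k, 4 * b ^ k + g ≤ (b + 1) * s ∧ (b + 1) * s < 4 * b ^ (k + 1) + g := by
    set N := ((b + 1) * s - g) / 4
    have hle : b ^ Nat.log b N ≤ N := Nat.pow_log_le_self b (by omega)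
    have hlt : N < b ^ (Nat.log b N + 1) := Nat.lt_pow_succ_log_self hb N
    exact ⟨Nat.log b N, by omega, by omega⟩
  by_cases hnext : 2 * ((b + 1) * b ^ k) + g ≤ (b + 1) * s
  · refine ⟨(b + 1) * b ^ k, ?_, hnext, ?_⟩
    · have hdigits : digitSum b (1 + b * 1) = 1 + digitSum b 1 := digitSum_add_mul hb hb 1
      have hone : digitSum b 1 ≤ 1 := digitSum_le_self b 1
      rw [mul_one, add_comm] at hdigits
      rw [digitSum_mul_base_pow hb]
      omega
    · by_contra! hge
      refine hk_succ.not_ge ?_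
      calc 4 * b ^ (k + 1) + g ≤ (4 * b * 1) * b ^ k + (b + 1) * g := by
            rw [pow_succ]
            nlinarith
        _ ≤ (b + 1) ^ 2 * b ^ k + (b + 1) * g := by
            gcongr
            exact four_mul_le_sq_add b 1
        _ = (b + 1) * ((b + 1) * b ^ k + g) := by ring
        _ ≤ (b + 1) * s := by gcongr
  · refine ⟨2 * b ^ k, ?_, by omega, ?_⟩
    · rw [digitSum_mul_base_pow hb]
      exact digitSum_le_self b 2
    · by_contra! hge
      refine hnext ?_
      calc 2 * ((b + 1) * b ^ k) + g ≤ (b + 1) * (2 * b ^ k + g) := by nlinarith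
        _ ≤ (b + 1) * s := by gcongr

end DigitSum

section BlockSum

/-- `IsBlockSum b d m`: the list `d`, read as base-`b` digits with the least significant first, can
be cut into consecutive nonempty blocks whose values add up to `m`. This is `PartSum` for an
arbitrary list in place of `Nat.digits b n`, which makes induction on the list possible. -/
def IsBlockSum (b : ℕ) (d : List ℕ) (m : ℕ) : Prop :=
  ∃ L : List (List ℕ), (∀ l ∈ L, l ≠ []) ∧ L.flatten = d ∧
    m = (L.map (fun l => Nat.ofDigits b l)).sum

/-- The block sum obtained by grouping the digits in pairs, starting from the least significant one;
a leftover most significant digit is its own block. -/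
def pairSum (b : ℕ) : List ℕ → ℕ
  | [] => 0
  | [x] => x
  | x :: y :: l => x + b * y + pairSum b l

variable {b g m A : ℕ} {l : List ℕ}

theorem IsBlockSum.nil (b : ℕ) : IsBlockSum b [] 0 := ⟨[], by simp⟩

theorem IsBlockSum.append {d : List ℕ} (hd : d ≠ []) (h : IsBlockSum b l m) :
    IsBlockSum b (d ++ l) (Nat.ofDigits b d + m) := by
  obtain ⟨L, hL, rfl, rfl⟩ := h
  exact ⟨d :: L, List.forall_mem_cons.2 ⟨hd, hL⟩, by simp, by simp⟩

theorem IsBlockSum.cons (x : ℕ) (h : IsBlockSum b l m) : IsBlockSum b (x :: l) (x + m) := by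
  simpa using h.append (List.cons_ne_nil x [])

theorem IsBlockSum.cons_cons (x y : ℕ) (h : IsBlockSum b l m) :
    IsBlockSum b (x :: y :: l) (x + b * y + m) := by
  simpa [Nat.ofDigits_cons] using h.append (List.cons_ne_nil x [y])

theorem isBlockSum_sum (b : ℕ) (l : List ℕ) : IsBlockSum b l l.sum := by
  induction l with
  | nil => exact .nil b
  | cons x l ih => simpa using ih.cons x

theorem isBlockSum_pairSum (b : ℕ) : ∀ l, IsBlockSum b l (pairSum b l)
  | [] => .nil b
  | [x] => (IsBlockSum.nil b).cons x
  | x :: y :: l => (isBlockSum_pairSum b l).cons_cons x y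

/-- Pairing off `x :: l` from `x` and from the first entry of `l` uses every digit once in the units
place and once in the `b` place, except that `x` only gets to the units place. -/
theorem pairSum_cons_add_pairSum (b x : ℕ) (l : List ℕ) :
    pairSum b (x :: l) + (x + pairSum b l) + b * x = (b + 1) * (x :: l).sum + x := by
  induction l generalizing x with
  | nil => simp only [pairSum, List.sum_singleton]; ring
  | cons y l ih =>
    simp only [pairSum, List.sum_cons] at ih ⊢
    linear_combination ih y

theorem exists_isBlockSum_mem_Ico_of_le_pairSum (hl : ∀ x ∈ l, b * x ≤ x + g) (hsum : l.sum < A)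
    (hpair : A ≤ pairSum b l) : ∃ m ∈ Set.Ico A (A + g), IsBlockSum b l m := by
  induction l using pairSum.induct generalizing A with
  | case1 => simp_all [pairSum]
  | case2 x => exact absurd hpair (by simpa [pairSum] using hsum)
  | case3 x y l ih =>
    simp only [List.sum_cons] at hsum
    by_cases hrest : A ≤ x + y + pairSum b l
    · obtain ⟨m, ⟨hle, hlt⟩, hm⟩ := ih (A := A - (x + y))
        (fun z hz ↦ hl z (by simp [hz])) (by omega) (by omega)
      exact ⟨x + (y + m), ⟨by omega, by omega⟩, (hm.cons y).cons x⟩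
    · have hy : b * y ≤ y + g := hl y (by simp)
      exact ⟨_, ⟨hpair, by rw [pairSum]; omega⟩, isBlockSum_pairSum b _⟩

theorem exists_isBlockSum_mem_Ico (hl : ∀ x ∈ l, b * x ≤ x + g)
    (hA : 2 * A + g ≤ (b + 1) * l.sum) (hsum : l.sum < A + g) :
    ∃ m ∈ Set.Ico A (A + g), IsBlockSum b l m := by
  rcases le_or_gt A l.sum with hle | hlt
  · exact ⟨l.sum, ⟨hle, hsum⟩, isBlockSum_sum b l⟩
  rcases l with _ | ⟨x, l⟩
  · simp only [List.sum_nil] at hA hlt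
    omega
  by_cases hpair : A ≤ pairSum b (x :: l)
  · exact exists_isBlockSum_mem_Ico_of_le_pairSum hl hlt hpair
  have hshift : A ≤ x + pairSum b l := by
    have hpairings := pairSum_cons_add_pairSum b x l
    have hx : b * x ≤ x + g := hl x (by simp)
    omega
  rw [List.sum_cons] at hlt
  obtain ⟨m, ⟨hmA, hmg⟩, hm⟩ := exists_isBlockSum_mem_Ico_of_le_pairSum (l := l) (A := A - x)
    (fun y hy ↦ hl y (by simp [hy])) (by omega) (by omega)
  exact ⟨x + m, ⟨by omega, by omega⟩, hm.cons x⟩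

end BlockSum

theorem partSum_digitSum (b n : ℕ) : PartSum b n (digitSum b n) := isBlockSum_sum b _

theorem exists_partSum_mem_Ico {b n A : ℕ} (hb : 1 < b)
    (hA : 2 * A + (b - 1) ^ 2 ≤ (b + 1) * digitSum b n)
    (hsum : digitSum b n < A + (b - 1) ^ 2) :
    ∃ m ∈ Set.Ico A (A + (b - 1) ^ 2), PartSum b n m := by
  refine exists_isBlockSum_mem_Ico (fun x hx ↦ ?_) hA hsum
  have hx : x ≤ b - 1 := Nat.le_sub_one_of_lt (Nat.digits_lt_base hb hx)
  calc b * x = (1 + (b - 1)) * x := by rw [Nat.add_sub_cancel' hb.le]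
    _ = x + (b - 1) * x := by rw [add_mul, one_mul]
    _ ≤ x + (b - 1) ^ 2 := by rw [sq]; gcongr

theorem exists_partSum_digitSum_digitSum_lt {b : ℕ} (hb : 1 < b) (n : ℕ) :
    ∃ m, PartSum b n m ∧ digitSum b (digitSum b m) < b := by
  rcases lt_or_ge (digitSum b n) b with hlt | hge
  · exact ⟨_, partSum_digitSum b n,
      ((digitSum_le_self b _).trans (digitSum_le_self b _)).trans_lt hlt⟩
  have hfour : 4 + (b - 1) ^ 2 ≤ (b + 1) * digitSum b n := by
    obtain ⟨e, rfl⟩ : ∃ e, b = e + 2 := Nat.exists_eq_add_of_le' hb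
    calc 4 + (e + 1) ^ 2 ≤ (e + 2 + 1) * (e + 2) := by linarith [Nat.zero_le e]
      _ ≤ (e + 2 + 1) * digitSum (e + 2) n := by gcongr
  obtain ⟨A, hA, hupper, hlower⟩ := exists_digitSum_le_two_and_lt_add hb hfour
  obtain ⟨m, hm, hpart⟩ := exists_partSum_mem_Ico hb hupper hlower
  exact ⟨m, hpart, digitSum_digitSum_lt_base hb hA hm⟩

theorem stmt_6_general {b : ℕ} (hb : 2 ≤ b) (n : ℕ) :
    ∃ m₁ m₂ m₃, PartSum b n m₁ ∧ PartSum b m₁ m₂ ∧ PartSum b m₂ m₃ ∧ m₃ < b := by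
  obtain ⟨m, hm, hlt⟩ := exists_partSum_digitSum_digitSum_lt hb n
  exact ⟨m, _, _, hm, partSum_digitSum b m, partSum_digitSum b _, hlt⟩

theorem stmt_6 (b : ℕ) (hb : 3 ≤ b) (n : ℕ) :
    n < b ∨
    (∃ m₁, PartSum b n m₁ ∧ m₁ < b) ∨
    (∃ m₁ m₂, PartSum b n m₁ ∧ PartSum b m₁ m₂ ∧ m₂ < b) ∨
    (∃ m₁ m₂ m₃, PartSum b n m₁ ∧ PartSum b m₁ m₂ ∧ PartSum b m₂ m₃ ∧ m₃ < b) :=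
  .inr <| .inr <| .inr <| stmt_6_general (by omega) n
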